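/- arXiv:1010.1315 — 2 statements merged into one kernel-verified Lean document; each statement's English description precedes it below -/
import Mathlib

section
/- For every pair (a_0, (a_t, a_{t-1}, …, a_1)) belonging to the inductively defined collection 𝒜, the leading number equals the continued fraction of the list: a_0 = [a_t, a_{t-1}, …, a_1]. -/
/-- Continued fraction value of a list `(a_t, a_{t-1}, …, a_1)` (head is `a_t`):
`cf [] = 0`, `cf (a :: L) = 1/(a - cf L)` (total division of `ℚ`, `1/0 = 0`).
In particular `cf [a₁] = 1/a₁`. -/
def cf : List ℚ → ℚ
  | [] => 0
  | a :: L => 1 / (a - cf L)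

/-- The inductively defined collection `𝒜` of pairs `(a₀, (a_t, …, a_1))`. -/
inductive chainSet : ℚ → List ℚ → Prop
  | base : chainSet 1 [1]
  | grow (a₀ a : ℚ) (L : List ℚ) : chainSet a₀ (a :: L) →
      chainSet (a₀ + 1) (1 :: (a + 1) :: L)
  | split (a₀ b c : ℚ) (L₁ L₂ : List ℚ) : chainSet a₀ (L₁ ++ b :: c :: L₂) →
      chainSet a₀ (L₁ ++ (b + 1) :: 1 :: (c + 1) :: L₂)

def cfGood : List ℚ → Prop
  | [] => True
  | a :: L => 0 < a - cf L ∧ cfGood L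

theorem cfGood_split (b c : ℚ) (L₂ : List ℚ) : ∀ L₁ : List ℚ, cfGood (L₁ ++ b :: c :: L₂) →
    cfGood (L₁ ++ (b + 1) :: 1 :: (c + 1) :: L₂) ∧
    cf (L₁ ++ (b + 1) :: 1 :: (c + 1) :: L₂) = cf (L₁ ++ b :: c :: L₂)
  | [], h => by
    simp only [List.nil_append, cfGood, cf] at h ⊢
    obtain ⟨h1, h2, h3⟩ := h
    have e : c + 1 - cf L₂ = (c - cf L₂) + 1 := by ring
    rw [e]
    generalize c - cf L₂ = y at *
    have e1 : 1 - 1 / (y + 1) = y / (y + 1) := by field_simp; ring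
    have e2 : b + 1 - 1 / (y / (y + 1)) = b - 1 / y := by field_simp; ring
    rw [e1, e2]
    exact ⟨⟨h1, by positivity, by positivity, h3⟩, rfl⟩
  | a :: L, h => by
    simp only [List.cons_append, cfGood, cf] at h ⊢
    obtain ⟨g, e⟩ := cfGood_split b c L₂ L h.2
    rw [e]
    exact ⟨⟨h.1, g⟩, rfl⟩

theorem chainSet_good (a₀ : ℚ) (L : List ℚ) (h : chainSet a₀ L) : cfGood L ∧ a₀ = cf L := by
  induction h with
  | base => norm_num [cfGood, cf]
  | grow a₀ a L _ ih =>
    simp only [cfGood, cf] at ih ⊢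
    obtain ⟨⟨h1, h2⟩, h3⟩ := ih
    have e : a + 1 - cf L = (a - cf L) + 1 := by ring
    rw [e, h3]
    generalize a - cf L = y at *
    have e1 : 1 - 1 / (y + 1) = y / (y + 1) := by field_simp; ring
    rw [e1]
    exact ⟨⟨by positivity, by positivity, h2⟩, by field_simp; ring⟩
  | split a₀ b c L₁ L₂ _ ih =>
    obtain ⟨g, e⟩ := cfGood_split b c L₂ L₁ ih.1
    exact ⟨g, ih.2.trans e.symm⟩

/-- For every `(a₀, (a_t, …, a_1)) ∈ 𝒜`, one has `a₀ = [a_t, a_{t-1}, …, a_1]`. -/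
theorem chainSet_eq_cf (a₀ : ℚ) (L : List ℚ) (h : chainSet a₀ L) : a₀ = cf L := by
  exact (chainSet_good a₀ L h).2
end

section
/- Let (a_0, (a_t, a_{t-1}, …, a_1)) belong to the inductively defined collection 𝒜, with t ≥ 2. Then for all indices 1 ≤ h ≤ l ≤ t the partial continued fraction is positive: [a_l, a_{l-1}, …, a_h] > 0. -/
def cfQ : List ℚ → Prop
  | [] => True
  | a :: L => cfQ L ∧ 0 < a - cf L

theorem cfQ_drop (L : List ℚ) (hL : cfQ L) (n : ℕ) : cfQ (L.drop n) := by
  induction n generalizing L with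
  | zero => simpa using hL
  | succ n ih =>
    cases L with
    | nil => simpa using hL
    | cons a L => simpa using ih L hL.1

theorem cfQ_right (K M : List ℚ) (hL : cfQ (K ++ M)) : cfQ M := by
  simpa using cfQ_drop _ hL K.length

theorem cfQ_pos (L : List ℚ) (hL : cfQ L) (hne : L ≠ []) : 0 < cf L := by
  cases L with
  | nil => exact absurd rfl hne
  | cons a L => exact one_div_pos.mpr hL.2

theorem cfQ_mono (M M' : List ℚ) (hle : cf M' ≤ cf M) (hM' : cfQ M') (K : List ℚ)
    (h : cfQ (K ++ M)) : cfQ (K ++ M') ∧ cf (K ++ M') ≤ cf (K ++ M) := by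
  induction K with
  | nil => exact ⟨hM', hle⟩
  | cons a K ih =>
    obtain ⟨h1, h2⟩ := ih h.1
    have h3 : 0 < a - cf (K ++ M) := h.2
    have h4 : a - cf (K ++ M) ≤ a - cf (K ++ M') := by linarith
    refine ⟨⟨h1, h3.trans_le h4⟩, ?_⟩
    exact one_div_le_one_div_of_le h3 h4

theorem cfQ_blow (b c : ℚ) (K : List ℚ) (h : cfQ (b :: c :: K)) :
    cfQ ((b + 1) :: 1 :: (c + 1) :: K) ∧
      cf ((b + 1) :: 1 :: (c + 1) :: K) = cf (b :: c :: K) := by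
  obtain ⟨⟨h1, h2⟩, h3⟩ := h
  simp only [cfQ, cf] at *
  generalize cf K = x at *
  obtain ⟨y, rfl⟩ : ∃ y, c = y + x := ⟨c - x, by ring⟩
  have e0 : y + x - x = y := by ring
  rw [e0] at h2 h3 ⊢
  have e1 : y + x + 1 - x = y + 1 := by ring
  rw [e1]
  have e2 : 1 - 1 / (y + 1) = y / (y + 1) := by field_simp; ring
  rw [e2]
  have e3 : b + 1 - 1 / (y / (y + 1)) = b - 1 / y := by field_simp; ring
  rw [e3]
  exact ⟨⟨⟨⟨h1, by linarith⟩, by positivity⟩, h3⟩, rfl⟩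

theorem cfQ_pair (b : ℚ) (h : cfQ [b]) : cfQ [b + 1, 1] ∧ cf [b + 1, 1] = cf [b] := by
  simp only [cfQ, cf] at *
  norm_num at *
  exact h

theorem cfQ_inc (b : ℚ) (h : cfQ [b]) : cfQ [b + 1] ∧ cf [b + 1] ≤ cf [b] := by
  have hb : 0 < b := by simpa [cfQ, cf] using h
  refine ⟨by simp only [cfQ, cf]; exact ⟨trivial, by linarith⟩, ?_⟩
  simp only [cf]
  exact one_div_le_one_div_of_le (by linarith) (by linarith)

theorem cfQ_chain (a₀ : ℚ) (L : List ℚ) (hA : chainSet a₀ L) :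
    ∀ P, P <+: L → cfQ P := by
  induction hA with
  | base =>
    intro P hP
    rcases List.prefix_cons_iff.1 hP with rfl | ⟨t, rfl, ht⟩
    · trivial
    · rw [List.prefix_nil] at ht
      subst ht
      simp [cfQ, cf]
  | grow a₀ a L _ ih =>
    intro P hP
    rcases List.prefix_cons_iff.1 hP with rfl | ⟨t, rfl, ht⟩
    · trivial
    rcases List.prefix_cons_iff.1 ht with rfl | ⟨K, rfl, hK⟩
    · simp [cfQ, cf]
    obtain ⟨h1, h2⟩ := ih (a :: K) (List.prefix_cons_iff.2 (Or.inr ⟨K, rfl, hK⟩))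
    refine ⟨⟨h1, by linarith⟩, ?_⟩
    simp only [cf]
    have : 1 / (a + 1 - cf K) < 1 := by
      rw [div_lt_one (by linarith)]; linarith
    linarith
  | split a₀ b c L₁ L₂ _ ih =>
    intro P hP
    have hc : P <+: L₁ ∨ ∃ t, P = L₁ ++ t ∧ t <+: (b + 1) :: 1 :: (c + 1) :: L₂ := by
      rcases List.prefix_or_prefix_of_prefix hP (List.prefix_append L₁ _) with h | ⟨t, rfl⟩
      · exact Or.inl h
      · exact Or.inr ⟨t, rfl, (List.prefix_append_right_inj _).1 hP⟩
    rcases hc with h | ⟨t, rfl, ht⟩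
    · exact ih _ (h.trans (List.prefix_append _ _))
    have ihr : ∀ t, t <+: b :: c :: L₂ → cfQ (L₁ ++ t) := fun t ht =>
      ih _ ((List.prefix_append_right_inj _).2 ht)
    have hb : cfQ (L₁ ++ [b]) := ihr _ ⟨c :: L₂, rfl⟩
    have hb' := cfQ_right _ _ hb
    rcases List.prefix_cons_iff.1 ht with rfl | ⟨t1, rfl, ht1⟩
    · exact ihr _ List.nil_prefix
    rcases List.prefix_cons_iff.1 ht1 with rfl | ⟨t2, rfl, ht2⟩
    · exact (cfQ_mono [b] _ (cfQ_inc b hb').2 (cfQ_inc b hb').1 _ hb).1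
    rcases List.prefix_cons_iff.1 ht2 with rfl | ⟨K, rfl, ⟨R, rfl⟩⟩
    · exact (cfQ_mono [b] _ (cfQ_pair b hb').2.le (cfQ_pair b hb').1 _ hb).1
    have hK : cfQ (L₁ ++ b :: c :: K) := ihr _ ⟨R, rfl⟩
    have hK' := cfQ_blow _ _ _ (cfQ_right _ _ hK)
    exact (cfQ_mono _ _ hK'.2.le hK'.1 _ hK).1

/-- If `(a₀, (a_t, …, a_1)) ∈ 𝒜` with `t ≥ 2`, then for all `1 ≤ h ≤ l ≤ t`
the partial continued fraction `[a_l, a_{l-1}, …, a_h]` (the continued fraction of the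
contiguous sublist from `a_l` down to `a_h`, where `a_t` is the head of the list and
`a_1` its last entry) is positive. -/
theorem chainSet_partial_cf_pos (a₀ : ℚ) (L : List ℚ) (hA : chainSet a₀ L)
    (ht : 2 ≤ L.length) (h l : ℕ) (h1 : 1 ≤ h) (hhl : h ≤ l) (hlt : l ≤ L.length) :
    0 < cf ((L.drop (L.length - l)).take (l - h + 1)) := by
  have hq := cfQ_drop _ (cfQ_chain a₀ L hA (L.take (L.length - l + (l - h + 1)))
    (List.take_prefix _ _)) (L.length - l)
  rw [List.take_drop]
  refine cfQ_pos _ hq ?_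
  intro hn
  have := congrArg List.length hn
  simp only [List.length_drop, List.length_take, List.length_nil] at this
  omega
end
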